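/- arXiv:2403.08788 — 2 statements merged into one kernel-verified Lean document; each statement's English description precedes it below -/
import Mathlib

section
/- Fix real numbers z0, z1, z2 with z0 ≤ z2. The map t ↦ IoU(z0, z1, z2, t) is unimodal with peak at g3 on the valid range: (i) if z1 ≤ t ≤ t' ≤ g3, then IoU(z0, z1, z2, t) ≤ IoU(z0, z1, z2, t'); (ii) if g3 ≤ t ≤ t' and z1 ≤ t, then IoU(z0, z1, z2, t') ≤ IoU(z0, z1, z2, t). -/
/-!
For a valid box the union is positive, so quotients may be compared by cross-multiplication.
Write `w = z2 - z0`, `m = max z1 g1`, and let `G` be the area of the ground truth.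

Above `g3` the intersection no longer depends on `t` while the area of the box grows, so the IoU
decreases. Below `g3` the intersection is a constant times `max 0 (t - m)`, and since
`I / (S - I)` increases with `I / S`, it suffices that `max 0 (t - m) / (w * (t - z1) + G)`
increases; this holds because `z1 ≤ m` and `G > 0`.
-/

/-- Area of a box given by corner coordinates `(z0, z1)` (bottom-left) and
`(z2, z3)` (upper-right). -/
noncomputable def area (z0 z1 z2 z3 : ℝ) : ℝ := (z2 - z0) * (z3 - z1)

/-- Area of the intersection of the box `(z0, z1, z2, z3)` with the
ground-truth box `(g0, g1, g2, g3)`. -/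
noncomputable def interArea (g0 g1 g2 g3 z0 z1 z2 z3 : ℝ) : ℝ :=
  max 0 (min z2 g2 - max z0 g0) * max 0 (min z3 g3 - max z1 g1)

/-- Intersection over union of the box `(z0, z1, z2, z3)` with the
ground-truth box `(g0, g1, g2, g3)`. -/
noncomputable def iou (g0 g1 g2 g3 z0 z1 z2 z3 : ℝ) : ℝ :=
  interArea g0 g1 g2 g3 z0 z1 z2 z3 /
    (area z0 z1 z2 z3 + area g0 g1 g2 g3 - interArea g0 g1 g2 g3 z0 z1 z2 z3)

/-- For a valid box, the union is at least the area of the ground truth, hence positive: the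
intersection is no larger than the box `(z0, z1, z2, t)`. -/
lemma union_pos (g0 g1 g2 g3 : ℝ) (hg02 : g0 < g2) (hg13 : g1 < g3)
    (z0 z1 z2 t : ℝ) (hb02 : z0 ≤ z2) (ht : z1 ≤ t) :
    0 < area z0 z1 z2 t + area g0 g1 g2 g3 - interArea g0 g1 g2 g3 z0 z1 z2 t := by
  have hI : interArea g0 g1 g2 g3 z0 z1 z2 t ≤ area z0 z1 z2 t := by
    unfold interArea area
    apply mul_le_mul _ _ (le_max_left _ _) (sub_nonneg.2 hb02)
    · exact max_le (sub_nonneg.2 hb02) (sub_le_sub (min_le_left _ _) (le_max_left _ _))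
    · exact max_le (sub_nonneg.2 ht) (sub_le_sub (min_le_left _ _) (le_max_left _ _))
  have hG : 0 < area g0 g1 g2 g3 := mul_pos (sub_pos.2 hg02) (sub_pos.2 hg13)
  linarith

theorem stmt_7
    (g0 g1 g2 g3 : ℝ) (hg02 : g0 < g2) (hg13 : g1 < g3)
    (z0 z1 z2 : ℝ) (hb02 : z0 ≤ z2) :
    (∀ t t' : ℝ, z1 ≤ t → t ≤ t' → t' ≤ g3 →
      iou g0 g1 g2 g3 z0 z1 z2 t ≤ iou g0 g1 g2 g3 z0 z1 z2 t') ∧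
    (∀ t t' : ℝ, g3 ≤ t → t ≤ t' → z1 ≤ t →
      iou g0 g1 g2 g3 z0 z1 z2 t' ≤ iou g0 g1 g2 g3 z0 z1 z2 t) := by
  constructor
  · intro t t' hzt htt' htg
    have hU := union_pos g0 g1 g2 g3 hg02 hg13 z0 z1 z2 t hb02 hzt
    have hU' := union_pos g0 g1 g2 g3 hg02 hg13 z0 z1 z2 t' hb02 (hzt.trans htt')
    unfold iou
    rw [div_le_div_iff₀ hU hU']
    -- The products of the two intersections cancel after cross-multiplication.
    suffices h : interArea g0 g1 g2 g3 z0 z1 z2 t * (area z0 z1 z2 t' + area g0 g1 g2 g3) ≤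
        interArea g0 g1 g2 g3 z0 z1 z2 t' * (area z0 z1 z2 t + area g0 g1 g2 g3) by
      linarith
    have hG : 0 < area g0 g1 g2 g3 := mul_pos (sub_pos.2 hg02) (sub_pos.2 hg13)
    have hw : 0 ≤ z2 - z0 := sub_nonneg.2 hb02
    unfold interArea
    rw [min_eq_left htg, min_eq_left (htt'.trans htg), mul_assoc, mul_assoc]
    apply mul_le_mul_of_nonneg_left _ (le_max_left _ _)
    have hm : z1 ≤ max z1 g1 := le_max_left _ _
    generalize max z1 g1 = m at hm ⊢
    generalize area g0 g1 g2 g3 = G at hG ⊢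
    unfold area
    rcases le_total t m with h | h
    · rw [max_eq_left (sub_nonpos.2 h), zero_mul]
      have : 0 ≤ (z2 - z0) * (t - z1) := mul_nonneg hw (sub_nonneg.2 hzt)
      exact mul_nonneg (le_max_left _ _) (by linarith)
    · rw [max_eq_right (sub_nonneg.2 h), max_eq_right (sub_nonneg.2 (h.trans htt'))]
      -- The difference of the two sides is `(t' - t) * (G + (z2 - z0) * (m - z1))`.
      have h1 : 0 ≤ (t' - t) * (G + (z2 - z0) * (m - z1)) :=
        mul_nonneg (sub_nonneg.2 htt') (add_nonneg hG.le (mul_nonneg hw (sub_nonneg.2 hm)))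
      linarith
  · intro t t' hgt htt' hzt
    have hU := union_pos g0 g1 g2 g3 hg02 hg13 z0 z1 z2 t hb02 hzt
    have hI : interArea g0 g1 g2 g3 z0 z1 z2 t' = interArea g0 g1 g2 g3 z0 z1 z2 t := by
      unfold interArea
      rw [min_eq_right hgt, min_eq_right (hgt.trans htt')]
    have hA : area z0 z1 z2 t ≤ area z0 z1 z2 t' :=
      mul_le_mul_of_nonneg_left (by linarith) (sub_nonneg.2 hb02)
    unfold iou
    rw [hI]
    exact div_le_div_of_nonneg_left (mul_nonneg (le_max_left _ _) (le_max_left _ _)) hU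
      (by linarith)
end

section
/- Define b* = (z0*, z1*, z2*, z3*) by z_i* = max(l_i, min(g_i, u_i)) for i = 0,…,3 (each ground-truth coordinate clipped to its interval). Then b* is a bounding box belonging to the box interval [l, u], and for every bounding box b belonging to [l, u], IoU(b) ≤ IoU(b*); i.e., IoU(b*) is the maximum of IoU over the bounding boxes in [l, u]. (Correctness of the Optimal_IoU upper bound.) -/
/-- Length of the intersection of the intervals `[x, y]` and `[p, q]`. -/
noncomputable def overlap (p q x y : ℝ) : ℝ := max 0 (min y q - max x p)

theorem overlap_nonneg (p q x y : ℝ) : 0 ≤ overlap p q x y := le_max_left _ _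

theorem overlap_le_length {p q x y : ℝ} (h : x ≤ y) : overlap p q x y ≤ y - x :=
  max_le (by linarith) (by linarith [min_le_left y q, le_max_left x p])

theorem clip_mem {l u : ℝ} (g : ℝ) (h : l ≤ u) :
    l ≤ max l (min g u) ∧ max l (min g u) ≤ u :=
  ⟨le_max_left _ _, max_le h (min_le_right _ _)⟩

theorem clip_le_clip {p q l u l' u' : ℝ} (hpq : p < q) (hl : l ≤ l') (hu : u ≤ u') :
    max l (min p u) ≤ max l' (min q u') :=
  max_le_max hl (min_le_min hpq.le hu)

/-- The left end of the overlap with `[p, q]` is furthest left when the left endpoint is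
the clipped `p`. -/
theorem max_clip_le {p l u x : ℝ} (hl : l ≤ x) (hu : x ≤ u) :
    max (max l (min p u)) p ≤ max x p := by
  grind

theorem le_min_clip {q l u y : ℝ} (hl : l ≤ y) (hu : y ≤ u) :
    min y q ≤ min (max l (min q u)) q := by
  grind

theorem overlap_le_clip {p q l u l' u' x y : ℝ}
    (hx : l ≤ x) (hx' : x ≤ u) (hy : l' ≤ y) (hy' : y ≤ u') :
    overlap p q x y ≤ overlap p q (max l (min p u)) (max l' (min q u')) :=
  max_le_max le_rfl (sub_le_sub (le_min_clip hy hy') (max_clip_le hx hx'))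

/-- If `[x, y]` meets the target `[p, q]` in positive length, clipping does not increase
the part of the length lying outside the target. -/
theorem excess_clip_le {p q l u l' u' x y : ℝ}
    (hx : l ≤ x) (hx' : x ≤ u) (hy : l' ≤ y) (hy' : y ≤ u')
    (hpos : 0 < overlap p q x y) :
    max l' (min q u') - max l (min p u)
        - overlap p q (max l (min p u)) (max l' (min q u'))
      ≤ y - x - overlap p q x y := by
  have h1 : overlap p q x y = min y q - max x p := by
    unfold overlap at hpos ⊢
    grind
  have h2 : min (max l' (min q u')) q - max (max l (min p u)) p
      ≤ overlap p q (max l (min p u)) (max l' (min q u')) := le_max_right _ _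
  have h3 : max (max l (min p u)) p - max l (min p u) ≤ max x p - x := by grind
  have h4 : max l' (min q u') - min (max l' (min q u')) q ≤ y - min y q := by grind
  linarith

theorem overlap_mul_clip_le {p q l u l' u' x y : ℝ} (hxy : x ≤ y)
    (hx : l ≤ x) (hx' : x ≤ u) (hy : l' ≤ y) (hy' : y ≤ u') :
    overlap p q x y * (max l' (min q u') - max l (min p u))
      ≤ overlap p q (max l (min p u)) (max l' (min q u')) * (y - x) := by
  rcases (overlap_nonneg p q x y).eq_or_lt with h0 | hpos
  · rw [← h0, zero_mul]
    exact mul_nonneg (overlap_nonneg _ _ _ _) (by linarith)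
  · -- With `w = i + e`: `i (i* + e*) ≤ i i* + i e ≤ i* (i + e)`.
    have he := mul_le_mul_of_nonneg_left
      (excess_clip_le (p := p) (q := q) hx hx' hy hy' hpos) hpos.le
    have hi := mul_le_mul_of_nonneg_right
      (overlap_le_clip (p := p) (q := q) hx hx' hy hy')
      (sub_nonneg.2 (overlap_le_length (p := p) (q := q) hxy))
    linarith

theorem interArea_le_area {g0 g1 g2 g3 z0 z1 z2 z3 : ℝ} (h02 : z0 ≤ z2) (h13 : z1 ≤ z3) :
    interArea g0 g1 g2 g3 z0 z1 z2 z3 ≤ area z0 z1 z2 z3 :=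
  mul_le_mul (overlap_le_length h02) (overlap_le_length h13)
    (overlap_nonneg _ _ _ _) (by linarith)

theorem stmt_11
    (g0 g1 g2 g3 : ℝ) (hg02 : g0 < g2) (hg13 : g1 < g3)
    (l0 l1 l2 l3 u0 u1 u2 u3 : ℝ)
    (hlu0 : l0 ≤ u0) (hlu1 : l1 ≤ u1) (hlu2 : l2 ≤ u2) (hlu3 : l3 ≤ u3)
    (hl02 : l0 ≤ l2) (hu02 : u0 ≤ u2) (hl13 : l1 ≤ l3) (hu13 : u1 ≤ u3)
    (z0s z1s z2s z3s : ℝ)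
    (h0s : z0s = max l0 (min g0 u0)) (h1s : z1s = max l1 (min g1 u1))
    (h2s : z2s = max l2 (min g2 u2)) (h3s : z3s = max l3 (min g3 u3)) :
    (z0s ≤ z2s ∧ z1s ≤ z3s ∧
      l0 ≤ z0s ∧ z0s ≤ u0 ∧ l1 ≤ z1s ∧ z1s ≤ u1 ∧
      l2 ≤ z2s ∧ z2s ≤ u2 ∧ l3 ≤ z3s ∧ z3s ≤ u3) ∧
    ∀ z0 z1 z2 z3 : ℝ, z0 ≤ z2 → z1 ≤ z3 →
      l0 ≤ z0 → z0 ≤ u0 → l1 ≤ z1 → z1 ≤ u1 →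
      l2 ≤ z2 → z2 ≤ u2 → l3 ≤ z3 → z3 ≤ u3 →
      iou g0 g1 g2 g3 z0 z1 z2 z3 ≤ iou g0 g1 g2 g3 z0s z1s z2s z3s := by
  subst h0s h1s h2s h3s
  have h02 := clip_le_clip hg02 hl02 hu02
  have h13 := clip_le_clip hg13 hl13 hu13
  refine ⟨⟨h02, h13, (clip_mem g0 hlu0).1, (clip_mem g0 hlu0).2, (clip_mem g1 hlu1).1,
    (clip_mem g1 hlu1).2, (clip_mem g2 hlu2).1, (clip_mem g2 hlu2).2,
    (clip_mem g3 hlu3).1, (clip_mem g3 hlu3).2⟩, ?_⟩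
  intro z0 z1 z2 z3 hz02 hz13 a0 b0 a1 b1 a2 b2 a3 b3
  have hG : 0 < area g0 g1 g2 g3 := mul_pos (by linarith) (by linarith)
  have hA := interArea_le_area (g0 := g0) (g1 := g1) (g2 := g2) (g3 := g3) hz02 hz13
  have hAs := interArea_le_area (g0 := g0) (g1 := g1) (g2 := g2) (g3 := g3) h02 h13
  have hI : interArea g0 g1 g2 g3 z0 z1 z2 z3 ≤ interArea g0 g1 g2 g3
      (max l0 (min g0 u0)) (max l1 (min g1 u1)) (max l2 (min g2 u2)) (max l3 (min g3 u3)) :=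
    mul_le_mul (overlap_le_clip a0 b0 a2 b2) (overlap_le_clip a1 b1 a3 b3)
      (overlap_nonneg _ _ _ _) (overlap_nonneg _ _ _ _)
  have hIA : interArea g0 g1 g2 g3 z0 z1 z2 z3
        * area (max l0 (min g0 u0)) (max l1 (min g1 u1)) (max l2 (min g2 u2))
            (max l3 (min g3 u3))
      ≤ interArea g0 g1 g2 g3
          (max l0 (min g0 u0)) (max l1 (min g1 u1)) (max l2 (min g2 u2)) (max l3 (min g3 u3))
        * area z0 z1 z2 z3 := by
    have h := mul_le_mul
      (overlap_mul_clip_le (p := g0) (q := g2) hz02 a0 b0 a2 b2)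
      (overlap_mul_clip_le (p := g1) (q := g3) hz13 a1 b1 a3 b3)
      (mul_nonneg (overlap_nonneg _ _ _ _) (sub_nonneg.2 h13))
      (mul_nonneg (overlap_nonneg _ _ _ _) (sub_nonneg.2 hz02))
    rw [mul_mul_mul_comm, mul_mul_mul_comm (overlap _ _ (max _ _) _)] at h
    exact h
  have hIG := mul_le_mul_of_nonneg_right hI hG.le
  unfold iou
  rw [div_le_div_iff₀ (by linarith) (by linarith)]
  linarith
end
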